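/- For every choice of the generator kernel G, the supremum over measurable discriminators D : X × Y → (0,1) of L_xy(D) = ∫ log D dΠ + ∫ log(1 − D) dπ_g^{xy} is at least −log 4, and it equals −log 4 if and only if Π = π_g^{xy}, i.e., if and only if the true joint p(x, y) equals the generator joint p(y)·p_g(x|y). At that point the optimal discriminator dΠ/d(Π + π_g^{xy}) equals 1/2 (Π + π_g^{xy})-almost everywhere. -/

import Mathlib

open MeasureTheory ProbabilityTheory
open scoped ENNReal ProbabilityTheory

theorem aux_ineq (d : ℝ) (hd : d ≠ 0) (h1 : -1 ≤ d) (h2 : d ≤ 1) :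
    -Real.log 4 < (1 + d) * Real.log (1 / 2 + d / 4) + (1 - d) * Real.log (1 / 2 - d / 4) := by
  have e1 : Real.log (1 / 2 + d / 4) = Real.log (1 + d / 2) - Real.log 2 := by
    rw [← Real.log_div (by linarith) (by norm_num)]; congr 1; ring
  have e2 : Real.log (1 / 2 - d / 4) = Real.log (1 - d / 2) - Real.log 2 := by
    rw [← Real.log_div (by linarith) (by norm_num)]; congr 1; ring
  have e4 : Real.log 4 = 2 * Real.log 2 := by
    rw [show (4 : ℝ) = 2 ^ 2 by norm_num, Real.log_pow]; norm_num
  have a1 := Real.one_sub_inv_le_log_of_pos (show 0 < 1 + d / 2 by linarith)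
  have a2 := Real.one_sub_inv_le_log_of_pos (show 0 < 1 - d / 2 by linarith)
  have b1 := mul_le_mul_of_nonneg_left a1 (show 0 ≤ 1 + d by linarith)
  have b2 := mul_le_mul_of_nonneg_left a2 (show 0 ≤ 1 - d by linarith)
  have p1 : 0 < 1 + d / 2 := by linarith
  have p2 : 0 < 1 - d / 2 := by linarith
  have key : (1 + d) * (1 - (1 + d / 2)⁻¹) + (1 - d) * (1 - (1 - d / 2)⁻¹)
      = d ^ 2 / 2 * ((1 + d / 2)⁻¹ * (1 - d / 2)⁻¹) := by
    have q1 := p1.ne'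
    have q2 := p2.ne'
    generalize hu : 1 + d / 2 = u at *
    generalize hv : 1 - d / 2 = v at *
    obtain rfl : d = u - v := by linarith
    obtain rfl : v = 2 - u := by linarith
    field_simp
    ring
  have kp : 0 < d ^ 2 / 2 * ((1 + d / 2)⁻¹ * (1 - d / 2)⁻¹) := by positivity
  rw [e1, e2, e4]
  linarith

theorem aux_lint {α : Type*} [MeasurableSpace α] (P : Measure α) [IsProbabilityMeasure P]
    (A : Set α) (hA : MeasurableSet A) (a b : ℝ) (ha : 0 ≤ a) (hb : 0 ≤ b) :
    ∫⁻ p, ENNReal.ofReal (A.indicator (fun _ => a) p + Aᶜ.indicator (fun _ => b) p) ∂P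
      = ENNReal.ofReal (P.real A * a + (1 - P.real A) * b) := by
  rw [← ofReal_integral_eq_lintegral_ofReal]
  · rw [integral_add, integral_indicator_const _ hA, integral_indicator_const _ hA.compl,
      probReal_compl_eq_one_sub hA]
    · simp
    · exact (integrable_const a).indicator hA
    · exact (integrable_const b).indicator hA.compl
  · exact ((integrable_const a).indicator hA).add ((integrable_const b).indicator hA.compl)
  · refine Filter.Eventually.of_forall fun p => ?_
    exact add_nonneg (Set.indicator_nonneg (fun _ _ => ha) p)
      (Set.indicator_nonneg (fun _ _ => hb) p)

theorem aux_main {α : Type*} [MeasurableSpace α] (P Q : Measure α) [IsProbabilityMeasure P]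
    [IsProbabilityMeasure Q] (g : EReal) (hg : g = ⨆ (D : α → ℝ) (_ : Measurable D)
        (_ : ∀ p, D p ∈ Set.Ioo (0 : ℝ) 1),
      -(((∫⁻ p, ENNReal.ofReal (-Real.log (D p)) ∂P
          + ∫⁻ p, ENNReal.ofReal (-Real.log (1 - D p)) ∂Q : ℝ≥0∞)) : EReal)) :
    ((-Real.log 4 : ℝ) : EReal) ≤ g ∧
      (g = ((-Real.log 4 : ℝ) : EReal) ↔ P = Q) ∧
      (P = Q → ∀ᵐ p ∂(P + Q), P.rnDeriv (P + Q) p = 1 / 2) := by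
  have e4 : Real.log 4 = 2 * Real.log 2 := by
    rw [show (4 : ℝ) = 2 ^ 2 by norm_num, Real.log_pow]; norm_num
  have hl2 : 0 < Real.log 2 := Real.log_pos (by norm_num)
  have low : ((-Real.log 4 : ℝ) : EReal) ≤ g := by
    rw [hg]
    refine le_iSup_of_le (fun _ => 1 / 2) (le_iSup_of_le measurable_const
      (le_iSup_of_le (fun _ => by norm_num) ?_))
    have : (1 : ℝ) - 1 / 2 = 1 / 2 := by norm_num
    simp only [this, lintegral_const, measure_univ, mul_one]
    rw [show -Real.log (1 / 2) = Real.log 2 by simp, ← ENNReal.ofReal_add hl2.le hl2.le,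
      EReal.coe_ennreal_ofReal, max_eq_left (by linarith), e4, two_mul, EReal.coe_neg]
  refine ⟨low, ⟨fun h => ?_, fun h => le_antisymm ?_ low⟩, fun h => ?_⟩
  · by_contra hne
    obtain ⟨A, hA, hPQ⟩ : ∃ A, MeasurableSet A ∧ P A ≠ Q A := by
      by_contra! hc
      exact hne (Measure.ext hc)
    have hd : P.real A - Q.real A ≠ 0 := by
      intro h0
      apply hPQ
      rwa [sub_eq_zero, measureReal_eq_measureReal_iff] at h0
    have hP1 : P.real A ≤ 1 := measureReal_le_one
    have hQ1 : Q.real A ≤ 1 := measureReal_le_one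
    have hP0 : 0 ≤ P.real A := measureReal_nonneg
    have hQ0 : 0 ≤ Q.real A := measureReal_nonneg
    set d := P.real A - Q.real A with hdd
    have hd1 : -1 ≤ d := by linarith
    have hd2 : d ≤ 1 := by linarith
    have key := aux_ineq d hd hd1 hd2
    set a := Real.log (1 / 2 + d / 4) with ha
    set b := Real.log (1 / 2 - d / 4) with hb
    have ha0 : a ≤ 0 := Real.log_nonpos (by linarith) (by linarith)
    have hb0 : b ≤ 0 := Real.log_nonpos (by linarith) (by linarith)
    classical
    let D : α → ℝ := fun p => if p ∈ A then 1 / 2 + d / 4 else 1 / 2 - d / 4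
    have hDm : Measurable D := Measurable.ite hA measurable_const measurable_const
    have hDI : ∀ p, D p ∈ Set.Ioo (0 : ℝ) 1 := by
      intro p
      simp only [D]
      split_ifs <;> constructor <;> linarith
    have i1 : ∫⁻ p, ENNReal.ofReal (-Real.log (D p)) ∂P
        = ENNReal.ofReal (P.real A * (-a) + (1 - P.real A) * (-b)) := by
      rw [← aux_lint P A hA (-a) (-b) (by linarith) (by linarith)]
      refine lintegral_congr fun p => ?_
      by_cases hp : p ∈ A <;> simp [D, hp, ha, hb]
    have i2 : ∫⁻ p, ENNReal.ofReal (-Real.log (1 - D p)) ∂Q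
        = ENNReal.ofReal (Q.real A * (-b) + (1 - Q.real A) * (-a)) := by
      rw [← aux_lint Q A hA (-b) (-a) (by linarith) (by linarith)]
      refine lintegral_congr fun p => ?_
      have s1 : 1 - (1 / 2 + d / 4) = 1 / 2 - d / 4 := by ring
      have s2 : 1 - (1 / 2 - d / 4) = 1 / 2 + d / 4 := by ring
      by_cases hp : p ∈ A
      · simp only [D, hp, if_true, s1]; simp [hp, hb]
      · simp only [D, hp, if_false, s2]; simp [hp, ha]
    have n1 : 0 ≤ P.real A * (-a) + (1 - P.real A) * (-b) :=
      add_nonneg (mul_nonneg hP0 (by linarith)) (mul_nonneg (by linarith) (by linarith))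
    have n2 : 0 ≤ Q.real A * (-b) + (1 - Q.real A) * (-a) :=
      add_nonneg (mul_nonneg hQ0 (by linarith)) (mul_nonneg (by linarith) (by linarith))
    have hle : -(((∫⁻ p, ENNReal.ofReal (-Real.log (D p)) ∂P
          + ∫⁻ p, ENNReal.ofReal (-Real.log (1 - D p)) ∂Q : ℝ≥0∞)) : EReal) ≤ g := by
      rw [hg]
      exact le_iSup_of_le D (le_iSup_of_le hDm (le_iSup_of_le hDI le_rfl))
    rw [i1, i2, ← ENNReal.ofReal_add n1 n2, EReal.coe_ennreal_ofReal,
      max_eq_left (add_nonneg n1 n2), h, ← EReal.coe_neg, EReal.coe_le_coe_iff] at hle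
    rw [hdd] at key
    linarith
  · subst h
    rw [hg]
    refine iSup_le fun D => iSup_le fun hDm => iSup_le fun hDI => ?_
    rw [EReal.coe_neg, EReal.neg_le_neg_iff, ← lintegral_add_left (by fun_prop)]
    have hb : ENNReal.ofReal (Real.log 4) ≤ ∫⁻ p, (ENNReal.ofReal (-Real.log (D p))
        + ENNReal.ofReal (-Real.log (1 - D p))) ∂P := by
      calc ENNReal.ofReal (Real.log 4) = ∫⁻ _, ENNReal.ofReal (Real.log 4) ∂P := by simp
        _ ≤ _ := by
          refine lintegral_mono fun p => ?_
          obtain ⟨h0, h1⟩ := hDI p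
          have h1' : 0 < 1 - D p := by linarith
          rw [← ENNReal.ofReal_add]
          · apply ENNReal.ofReal_le_ofReal
            rw [← neg_add, ← Real.log_mul h0.ne' h1'.ne', ← Real.log_inv]
            apply Real.log_le_log (by norm_num)
            rw [le_inv_comm₀ (by norm_num) (by positivity)]
            nlinarith [sq_nonneg (D p - 1 / 2)]
          · linarith [Real.log_nonpos h0.le h1.le]
          · linarith [Real.log_nonpos h1'.le (by linarith)]
    have := EReal.coe_ennreal_le_coe_ennreal_iff.2 hb
    rwa [EReal.coe_ennreal_ofReal, max_eq_left (by linarith)] at this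
  · subst h
    have hP : P = (P + P).withDensity (fun _ => 1 / 2) := by
      rw [withDensity_const]
      ext s hs
      simp only [Measure.smul_apply, Measure.add_apply, smul_eq_mul]
      rw [← two_mul, ← mul_assoc, one_div, ENNReal.inv_mul_cancel (by simp) (by simp), one_mul]
    have := Measure.rnDeriv_withDensity (P + P) (f := fun _ => (1 / 2 : ℝ≥0∞)) measurable_const
    rwa [← hP] at this

/-- Theorem 1 of the paper, the adversarial game `L_xy`.
For any Markov kernel `G : Y × Z → X` (generator), with `Π` the true joint data
distribution on `X × Y` and generator joint `πg` the pushforward of `(p_Y × p_Z) ⊗ₘ G`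
under `((y,z),x) ↦ (x,y)`, the supremum over measurable discriminators
`D : X × Y → (0,1)` of `L_xy(D) = ∫ log D dΠ + ∫ log (1 - D) dπg` (extended-real
valued; encoded as minus the sum of the `ℝ≥0∞`-valued integrals of the nonnegative
functions `-log D`, `-log (1-D)`) is at least `-log 4`, with equality iff `Π = πg`;
and at that point the optimal discriminator `dΠ/d(Π + πg)` equals `1/2` `(Π + πg)`-a.e. -/
theorem sgan_game_xy {X Y Z : Type*}
    [MeasurableSpace X] [MeasurableSpace Y] [MeasurableSpace Z]
    (Pi : Measure (X × Y)) [IsProbabilityMeasure Pi]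
    (pY : Measure Y) [IsProbabilityMeasure pY]
    (pZ : Measure Z) [IsProbabilityMeasure pZ]
    (G : Kernel (Y × Z) X) [IsMarkovKernel G] :
    let πg : Measure (X × Y) := ((pY.prod pZ) ⊗ₘ G).map (fun q => (q.2, q.1.1))
    let g : EReal := ⨆ (D : X × Y → ℝ) (_ : Measurable D)
        (_ : ∀ p, D p ∈ Set.Ioo (0 : ℝ) 1),
      -(((∫⁻ p, ENNReal.ofReal (-Real.log (D p)) ∂Pi
          + ∫⁻ p, ENNReal.ofReal (-Real.log (1 - D p)) ∂πg : ℝ≥0∞)) : EReal)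
    ((-Real.log 4 : ℝ) : EReal) ≤ g ∧
      (g = ((-Real.log 4 : ℝ) : EReal) ↔ Pi = πg) ∧
      (Pi = πg → ∀ᵐ p ∂(Pi + πg), Pi.rnDeriv (Pi + πg) p = 1 / 2) := by
  intro πg g
  have hm : Measurable (fun q : (Y × Z) × X => (q.2, q.1.1)) := by fun_prop
  haveI : IsProbabilityMeasure πg := Measure.isProbabilityMeasure_map hm.aemeasurable
  exact aux_main Pi πg g rfl
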